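/- For every real number x and every real t with |t| < π/2, the series Σ_{n≥1} B^{(1,0,∅,0)}_{2n−1}(x) · t^{2n−1}/(2n−1)! converges and its sum equals ∫_0^t (sec z)^x · (1 − x + x·sec z) dz, where sec z = 1/cos z. (Equivalently, the generating function B^{(1,0,∅,0)}(t,x) satisfies ∂B/∂t = (sec t)^x (1 − x + x sec t) with B(0,x) = 0.) -/

import Mathlib

/-- A permutation `σ` of `{1,…,n}` (as a permutation of `Fin n`) is up-down if
`σ_1 < σ_2 > σ_3 < σ_4 > ⋯`. -/
def UpDown {n : ℕ} (σ : Equiv.Perm (Fin n)) : Prop :=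
  ∀ i : Fin n, ∀ h : i.val + 1 < n,
    if Even i.val then σ i < σ ⟨i.val + 1, h⟩ else σ ⟨i.val + 1, h⟩ < σ i

/-- A permutation is down-up if `σ_1 > σ_2 < σ_3 > σ_4 < ⋯`. -/
def DownUp {n : ℕ} (σ : Equiv.Perm (Fin n)) : Prop :=
  ∀ i : Fin n, ∀ h : i.val + 1 < n,
    if Even i.val then σ ⟨i.val + 1, h⟩ < σ i else σ i < σ ⟨i.val + 1, h⟩

/-- `σ_i` matches `MMP(1,0,∅,0)`: there exists `j > i` with `σ_j > σ_i` and
there is no `j < i` with `σ_j < σ_i`. -/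
def Matches1 {n : ℕ} (σ : Equiv.Perm (Fin n)) (i : Fin n) : Prop :=
  (∃ j, i < j ∧ σ i < σ j) ∧ ¬ ∃ j, j < i ∧ σ j < σ i

/-- `mmp^{(1,0,∅,0)}(σ)`: the number of indices matching `MMP(1,0,∅,0)` in `σ`. -/
noncomputable def mmp1 {n : ℕ} (σ : Equiv.Perm (Fin n)) : ℕ :=
  {i : Fin n | Matches1 σ i}.ncard

open scoped Classical in
/-- `B^{(1,0,∅,0)}_{2n+1}(x) = Σ_{σ ∈ UD_{2n+1}} x^{mmp^{(1,0,∅,0)}(σ)}`. -/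
noncomputable def Bpoly (n : ℕ) (x : ℝ) : ℝ :=
  ∑ σ : Equiv.Perm (Fin (2*n+1)), if UpDown σ then x ^ mmp1 σ else 0


section comb
variable {α : Type*} [LinearOrder α]

def altL : Bool → List α → Prop
  | _, [] => True
  | _, [_] => True
  | b, a :: c :: l => (if b = true then a < c else c < a) ∧ altL (!b) (c :: l)

def rl : List α → ℕ
  | [] => 0
  | a :: l => rl l + if ∀ b ∈ l, a < b then 1 else 0

def Arr (s : Finset α) : Finset (List α) := s.val.lists.toFinset

lemma mem_Arr {s : Finset α} {l : List α} : l ∈ Arr s ↔ l.Nodup ∧ l.toFinset = s := by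
  unfold Arr
  rw [Multiset.mem_toFinset, Multiset.mem_lists_iff]
  constructor
  · intro h
    have h1 : l.Nodup := by
      have := s.nodup
      rw [h] at this
      simpa using this
    refine ⟨h1, ?_⟩
    ext a
    rw [List.mem_toFinset, ← Finset.mem_val, h]
    simp
  · rintro ⟨h1, rfl⟩
    simp [List.toFinset_val, h1.dedup]

lemma length_Arr {s : Finset α} {l : List α} (h : l ∈ Arr s) : l.length = s.card := by
  rw [mem_Arr] at h
  rw [← h.2, List.toFinset_card_of_nodup h.1]

lemma Arr_empty : Arr (∅ : Finset α) = {[]} := by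
  ext l
  rw [mem_Arr]
  simp only [List.toFinset_eq_empty_iff, Finset.mem_singleton]
  constructor
  · exact fun h => h.2
  · rintro rfl; simp

lemma rl_append (l1 l2 : List α) (m : α) (h1 : ∀ a ∈ l1, m < a) (h2 : ∀ a ∈ l2, m < a) :
    rl (l1 ++ m :: l2) = rl l2 + 1 := by
  induction l1 with
  | nil => simp only [List.nil_append, rl]; rw [if_pos h2]
  | cons a l ih =>
    simp only [List.cons_append, rl]
    rw [ih (fun b hb => h1 b (by simp [hb])), if_neg]
    intro h
    exact absurd (h m (by simp)) (not_lt.2 (h1 a (by simp)).le)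

lemma altL_cons_min (b : Bool) (l2 : List α) (m : α) (h2 : ∀ a ∈ l2, m < a) :
    altL b (m :: l2) ↔ (l2 ≠ [] → b = true) ∧ altL false l2 := by
  cases l2 with
  | nil => simp [altL]
  | cons c l =>
    have := h2 c (by simp)
    cases b <;> simp [altL, this, not_lt.2 this.le]

lemma altL_append (b : Bool) (l1 l2 : List α) (m : α) (h1 : ∀ a ∈ l1, m < a)
    (h2 : ∀ a ∈ l2, m < a) :
    altL b (l1 ++ m :: l2) ↔ altL b l1 ∧ altL false l2 ∧
      (l1 ≠ [] → (Even l1.length ↔ b = true)) ∧ (l2 ≠ [] → (Even l1.length ↔ b = true)) := by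
  induction l1 generalizing b with
  | nil =>
    rw [List.nil_append, altL_cons_min b l2 m h2]
    simp [altL]; tauto
  | cons a l ih =>
    have ih := ih (!b) (fun b hb => h1 b (by simp [hb]))
    have ham := h1 a (by simp)
    cases l with
    | nil =>
      simp only [List.nil_append, List.cons_append, altL, altL_cons_min _ l2 m h2]
      cases b <;> simp [ham, not_lt.2 ham.le]
    | cons c l =>
      simp only [List.cons_append, altL] at ih ⊢
      rw [ih]
      cases b <;> simp [Nat.even_add_one] <;> tauto

lemma sum_Arr (s : Finset α) (m : α) (hm : m ∉ s) (G : List α → ℂ) :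
    ∑ l ∈ Arr (insert m s), G l =
      ∑ u ∈ s.powerset, ∑ p ∈ Arr u ×ˢ Arr (s \ u), G (p.1 ++ m :: p.2) := by
  rw [Finset.sum_sigma']
  symm
  refine Finset.sum_bij (fun p _ => p.2.1 ++ m :: p.2.2) ?_ ?_ ?_ ?_
  · rintro ⟨u, l1, l2⟩ h
    simp only [Finset.mem_sigma, Finset.mem_powerset, Finset.mem_product, mem_Arr] at h ⊢
    obtain ⟨hu, ⟨n1, e1⟩, n2, e2⟩ := h
    have k1 : ∀ a, a ∈ l1 ↔ a ∈ u := fun a => by rw [← e1]; simp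
    have k2 : ∀ a, a ∈ l2 ↔ a ∈ s ∧ a ∉ u := fun a => by
      rw [← Finset.mem_sdiff, ← e2]; simp
    constructor
    · rw [List.nodup_append]
      refine ⟨n1, ?_, ?_⟩
      · rw [List.nodup_cons]; exact ⟨fun h => hm ((k2 m).1 h).1, n2⟩
      · intro a ha b hb hab
        subst hab
        rcases List.mem_cons.1 hb with rfl | hb
        · exact hm (hu ((k1 _).1 ha))
        · exact ((k2 _).1 hb).2 ((k1 _).1 ha)
    · ext a
      simp only [List.mem_toFinset, List.mem_append, List.mem_cons, k1, k2, Finset.mem_insert]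
      have := @hu a
      tauto
  · rintro ⟨u, l1, l2⟩ h ⟨u', l1', l2'⟩ h' he
    simp only [Finset.mem_sigma, Finset.mem_powerset, Finset.mem_product, mem_Arr] at h h' he
    obtain ⟨hu, ⟨n1, e1⟩, n2, e2⟩ := h
    obtain ⟨hu', ⟨n1', e1'⟩, n2', e2'⟩ := h'
    have a1 : m ∉ l1 := fun h => hm (hu (e1 ▸ List.mem_toFinset.2 h))
    have a2 : m ∉ l1' := fun h => hm (hu' (e1' ▸ List.mem_toFinset.2 h))
    have : l1 = l1' ∧ l2 = l2' := by
      clear e1 e1' n1 n1' hu hu' e2 e2' n2 n2'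
      induction l1 generalizing l1' with
      | nil =>
        cases l1' with
        | nil => simpa using he
        | cons a l => simp at he a2; tauto
      | cons a l ih =>
        cases l1' with
        | nil => simp at he a1; tauto
        | cons a' l' =>
          simp at he a1 a2
          have := ih l' he.2 a1.2 a2.2
          simp [he.1, this]
    obtain ⟨rfl, rfl⟩ := this
    rw [← e1, ← e1']
  · intro l hl
    rw [mem_Arr] at hl
    obtain ⟨n, e⟩ := hl
    have hml : m ∈ l := by rw [← List.mem_toFinset, e]; simp
    obtain ⟨l1, l2, rfl⟩ := List.append_of_mem hml
    rw [List.nodup_append, List.nodup_cons] at n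
    obtain ⟨n1, ⟨n2, n3⟩, n4⟩ := n
    have n5 : m ∉ l1 := fun h => n4 m h m (by simp) rfl
    have key : ∀ a, a ≠ m → (a ∈ l1 ∨ a ∈ l2 ↔ a ∈ s) := by
      intro a ha
      have := congrArg (a ∈ ·) e
      simpa [ha] using this
    refine ⟨⟨l1.toFinset, l1, l2⟩, ?_, rfl⟩
    simp only [Finset.mem_sigma, Finset.mem_powerset, Finset.mem_product, mem_Arr]
    refine ⟨?_, ⟨n1, trivial⟩, n3, ?_⟩
    · intro a ha
      rw [List.mem_toFinset] at ha
      exact (key a (fun h => n5 (h ▸ ha))).1 (Or.inl ha)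
    · ext a
      simp only [List.mem_toFinset, Finset.mem_sdiff]
      constructor
      · intro ha
        exact ⟨(key a (fun h => n2 (h ▸ ha))).1 (Or.inr ha), fun h => n4 a h a (by simp [ha]) rfl⟩
      · rintro ⟨ha, hb⟩
        have := (key a (fun h => hm (h ▸ ha))).2 ha
        tauto
  · intros; rfl

open scoped Classical in
/-- weighted count -/
noncomputable def W (b : Bool) (x : ℂ) (s : Finset α) : ℂ :=
  ∑ l ∈ Arr s, if altL b l then x ^ rl l else 0

open scoped Classical in
noncomputable def WB (x : ℂ) (s : Finset α) : ℂ :=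
  ∑ l ∈ Arr s, if altL true l then x ^ rl l.tail else 0

noncomputable def Tw (s : Finset α) : ℂ := if Even s.card then 0 else W false 1 s
noncomputable def Aw (x : ℂ) (s : Finset α) : ℂ := if Even s.card then W false x s else 0
noncomputable def Sw (s : Finset α) : ℂ := if Even s.card then W true 1 s else 0

lemma W_empty (b : Bool) (x : ℂ) : W b x (∅ : Finset α) = 1 := by
  simp [W, Arr_empty, altL, rl]

lemma W_insert (b : Bool) (x : ℂ) (s : Finset α) (m : α) (hm : ∀ a ∈ s, m < a) :
    W b x (insert m s) = ∑ u ∈ s.powerset,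
      if (u ≠ ∅ → (Even u.card ↔ b = true)) ∧ (s \ u ≠ ∅ → (Even u.card ↔ b = true)) then
        W b 1 u * (x * W false x (s \ u)) else 0 := by
  unfold W
  rw [sum_Arr s m (fun h => lt_irrefl _ (hm m h))]
  refine Finset.sum_congr rfl fun u hu => ?_
  rw [Finset.mul_sum, Finset.sum_mul_sum, ← Finset.sum_product']
  have hus := Finset.mem_powerset.1 hu
  have : ∀ p ∈ Arr u ×ˢ Arr (s \ u),
      (altL b (p.1 ++ m :: p.2) ↔ altL b p.1 ∧ altL false p.2 ∧
        ((u ≠ ∅ → (Even u.card ↔ b = true)) ∧ (s \ u ≠ ∅ → (Even u.card ↔ b = true)))) ∧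
      rl (p.1 ++ m :: p.2) = rl p.2 + 1 := by
    rintro ⟨l1, l2⟩ hp
    rw [Finset.mem_product] at hp
    have e1 := length_Arr hp.1
    obtain ⟨⟨n1, k1⟩, n2, k2⟩ := And.imp mem_Arr.1 mem_Arr.1 hp
    simp only at n1 k1 n2 k2 e1 ⊢
    have h1 : ∀ a ∈ l1, m < a := fun a ha => hm a (hus (k1 ▸ List.mem_toFinset.2 ha))
    have h2 : ∀ a ∈ l2, m < a := fun a ha => hm a
      (Finset.sdiff_subset (k2 ▸ List.mem_toFinset.2 ha : a ∈ s \ u))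
    refine ⟨?_, rl_append l1 l2 m h1 h2⟩
    rw [altL_append b l1 l2 m h1 h2, e1, ← k2]
    have : u = ∅ ↔ l1 = [] := by rw [← k1]; simp
    simp [this]
  split_ifs with hc
  · refine Finset.sum_congr rfl fun p hp => ?_
    rw [(this p hp).2]
    have hh : altL b (p.1 ++ m :: p.2) ↔ altL b p.1 ∧ altL false p.2 :=
      (this p hp).1.trans ⟨fun h => ⟨h.1, h.2.1⟩, fun h => ⟨h.1, h.2, hc⟩⟩
    classical
    simp only [hh]
    by_cases a1 : altL b p.1 <;> by_cases a2 : altL false p.2 <;> simp [a1, a2]; ring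
  · refine Finset.sum_eq_zero fun p hp => ?_
    rw [if_neg]
    rw [(this p hp).1]
    tauto

lemma WB_insert (x : ℂ) (s : Finset α) (m : α) (hm : ∀ a ∈ s, m < a) :
    WB x (insert m s) = ∑ u ∈ s.powerset,
      if (u ≠ ∅ → Even u.card) ∧ (s \ u ≠ ∅ → Even u.card) then
        W true 1 u * ((if u = ∅ then 1 else x) * W false x (s \ u)) else 0 := by
  unfold WB W
  rw [sum_Arr s m (fun h => lt_irrefl _ (hm m h))]
  refine Finset.sum_congr rfl fun u hu => ?_
  rw [Finset.mul_sum, Finset.sum_mul_sum, ← Finset.sum_product']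
  have hus := Finset.mem_powerset.1 hu
  have : ∀ p ∈ Arr u ×ˢ Arr (s \ u),
      (altL true (p.1 ++ m :: p.2) ↔ altL true p.1 ∧ altL false p.2 ∧
        ((u ≠ ∅ → Even u.card) ∧ (s \ u ≠ ∅ → Even u.card))) ∧
      rl (p.1 ++ m :: p.2).tail = rl p.2 + if u = ∅ then 0 else 1 := by
    rintro ⟨l1, l2⟩ hp
    rw [Finset.mem_product] at hp
    have e1 := length_Arr hp.1
    obtain ⟨⟨n1, k1⟩, n2, k2⟩ := And.imp mem_Arr.1 mem_Arr.1 hp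
    simp only at n1 k1 n2 k2 e1 ⊢
    have h1 : ∀ a ∈ l1, m < a := fun a ha => hm a (hus (k1 ▸ List.mem_toFinset.2 ha))
    have h2 : ∀ a ∈ l2, m < a := fun a ha => hm a
      (Finset.sdiff_subset (k2 ▸ List.mem_toFinset.2 ha : a ∈ s \ u))
    have : u = ∅ ↔ l1 = [] := by rw [← k1]; simp
    constructor
    · rw [altL_append true l1 l2 m h1 h2, e1, ← k2]
      simp [this]
    · cases l1 with
      | nil => simp [this]
      | cons a l =>
        simp only [this, List.cons_append, List.tail_cons]
        rw [rl_append l l2 m (fun b hb => h1 b (by simp [hb])) h2]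
        simp
  split_ifs with hc hu0
  · refine Finset.sum_congr rfl fun p hp => ?_
    rw [(this p hp).2]
    have hh : altL true (p.1 ++ m :: p.2) ↔ altL true p.1 ∧ altL false p.2 :=
      (this p hp).1.trans ⟨fun h => ⟨h.1, h.2.1⟩, fun h => ⟨h.1, h.2, hc⟩⟩
    classical
    simp only [hh]
    by_cases a1 : altL true p.1 <;> by_cases a2 : altL false p.2 <;> simp [a1, a2, hu0]
  · refine Finset.sum_congr rfl fun p hp => ?_
    rw [(this p hp).2]
    have hh : altL true (p.1 ++ m :: p.2) ↔ altL true p.1 ∧ altL false p.2 :=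
      (this p hp).1.trans ⟨fun h => ⟨h.1, h.2.1⟩, fun h => ⟨h.1, h.2, hc⟩⟩
    classical
    simp only [hh]
    by_cases a1 : altL true p.1 <;> by_cases a2 : altL false p.2 <;> simp [a1, a2, hu0]; ring
  · refine Finset.sum_eq_zero fun p hp => ?_
    rw [if_neg]
    rw [(this p hp).1]
    tauto

lemma card_sdiff_even {s u : Finset α} (hu : u ⊆ s) :
    Even s.card ↔ (Even u.card ↔ Even (s \ u).card) := by
  rw [← Finset.card_sdiff_add_card_eq_card hu, Nat.even_add]; tauto

lemma Tw_insert (s : Finset α) (m : α) (hm : ∀ a ∈ s, m < a) :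
    Tw (insert m s) = (if s.card = 0 then 1 else 0) + ∑ u ∈ s.powerset, Tw u * Tw (s \ u) := by
  have hms : m ∉ s := fun h => lt_irrefl _ (hm m h)
  have hE : Even (insert m s).card ↔ ¬ Even s.card := by
    rw [Finset.card_insert_of_notMem hms, Nat.even_add_one]
  rcases s.eq_empty_or_nonempty with rfl | hne
  · have := W_insert false 1 (∅ : Finset α) m (by simp)
    simp [Tw, W_empty] at this ⊢
    exact this
  have hc : s.card ≠ 0 := by simpa using hne.ne_empty
  rw [if_neg hc, zero_add]
  by_cases hs : Even s.card
  · unfold Tw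
    rw [if_neg (by tauto), W_insert _ _ _ _ hm]
    refine Finset.sum_congr rfl fun u hu => ?_
    have hus := Finset.mem_powerset.1 hu
    have h1 := card_sdiff_even hus
    by_cases hu2 : Even u.card
    · rw [if_neg]
      · simp [hu2]
      · rintro ⟨a1, a2⟩
        have b1 : u = ∅ := by by_contra h; simp [hu2] at a1; exact h a1
        subst b1
        simp at a2
        exact hne.ne_empty a2
    · simp [hu2, show ¬ Even (s \ u).card by tauto]
  · rw [Tw, if_pos (by tauto)]
    symm
    refine Finset.sum_eq_zero fun u hu => ?_
    have h1 := card_sdiff_even (Finset.mem_powerset.1 hu)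
    by_cases hu2 : Even u.card
    · simp [Tw, hu2]
    · simp [Tw, show Even (s \ u).card by tauto]

lemma Aw_insert (x : ℂ) (s : Finset α) (m : α) (hm : ∀ a ∈ s, m < a) :
    Aw x (insert m s) = x * ∑ u ∈ s.powerset, Tw u * Aw x (s \ u) := by
  have hms : m ∉ s := fun h => lt_irrefl _ (hm m h)
  have hE : Even (insert m s).card ↔ ¬ Even s.card := by
    rw [Finset.card_insert_of_notMem hms, Nat.even_add_one]
  rw [Finset.mul_sum]
  by_cases hs : Even s.card
  · rw [Aw, if_neg (by tauto)]
    symm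
    refine Finset.sum_eq_zero fun u hu => ?_
    have h1 := card_sdiff_even (Finset.mem_powerset.1 hu)
    by_cases hu2 : Even u.card
    · simp [Tw, hu2]
    · simp [Aw, show ¬ Even (s \ u).card by tauto]
  · rw [Aw, if_pos (by tauto), W_insert _ _ _ _ hm]
    refine Finset.sum_congr rfl fun u hu => ?_
    have hus := Finset.mem_powerset.1 hu
    have h1 := card_sdiff_even hus
    by_cases hu2 : Even u.card
    · rw [if_neg]
      · simp [Tw, hu2]
      · rintro ⟨a1, a2⟩
        have b1 : s \ u = ∅ := by by_contra h; simpa [hu2] using a2 h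
        simp [b1] at h1
        tauto
    · rw [if_pos (by simp [hu2])]
      simp [Aw, Tw, hu2, show Even (s \ u).card by tauto]
      ring

lemma Sw_insert (s : Finset α) (m : α) (hm : ∀ a ∈ s, m < a) :
    Sw (insert m s) = ∑ u ∈ s.powerset, Sw u * Tw (s \ u) := by
  have hms : m ∉ s := fun h => lt_irrefl _ (hm m h)
  have hE : Even (insert m s).card ↔ ¬ Even s.card := by
    rw [Finset.card_insert_of_notMem hms, Nat.even_add_one]
  by_cases hs : Even s.card
  · rw [Sw, if_neg (by tauto)]
    symm
    refine Finset.sum_eq_zero fun u hu => ?_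
    have h1 := card_sdiff_even (Finset.mem_powerset.1 hu)
    by_cases hu2 : Even u.card
    · simp [Tw, show Even (s \ u).card by tauto]
    · simp [Sw, hu2]
  · rw [Sw, if_pos (by tauto), W_insert _ _ _ _ hm]
    refine Finset.sum_congr rfl fun u hu => ?_
    have hus := Finset.mem_powerset.1 hu
    have h1 := card_sdiff_even hus
    by_cases hu2 : Even u.card
    · rw [if_pos (by simp [hu2])]
      simp [Sw, Tw, hu2, show ¬ Even (s \ u).card by tauto]
    · rw [if_neg]
      · simp [Sw, hu2]
      · rintro ⟨a1, a2⟩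
        have b1 : u = ∅ := by by_contra h; simpa [hu2] using a1 h
        simp [b1] at hu2

lemma WB_insert' (x : ℂ) (s : Finset α) (m : α) (hm : ∀ a ∈ s, m < a) (hs : Even s.card) :
    WB x (insert m s) = ∑ u ∈ s.powerset,
      (x * Sw u + if u.card = 0 then 1 - x else 0) * Aw x (s \ u) := by
  rw [WB_insert _ _ _ hm]
  refine Finset.sum_congr rfl fun u hu => ?_
  have h1 := card_sdiff_even (Finset.mem_powerset.1 hu)
  by_cases hu2 : Even u.card
  · rw [if_pos (by simp [hu2])]
    by_cases hu0 : u = ∅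
    · subst hu0; simp [Sw, Aw, W_empty, hs]
    · simp [Sw, Aw, hu2, hu0, show Even (s \ u).card by tauto]; ring
  · have hu0 : u ≠ ∅ := by rintro rfl; simp at hu2
    rw [if_neg (by simp [hu2, hu0])]
    simp [Aw, show ¬ Even (s \ u).card by tauto]

lemma sum_pow_card (s : Finset α) (f g : ℕ → ℂ) :
    ∑ u ∈ s.powerset, f u.card * g (s \ u).card =
      ∑ k ∈ Finset.range (s.card + 1), s.card.choose k * f k * g (s.card - k) := by
  rw [Finset.sum_congr rfl (g := fun u => (fun k => f k * g (s.card - k)) u.card),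
    Finset.sum_powerset_apply_card (fun k => f k * g (s.card - k))]
  · simp [nsmul_eq_mul, mul_assoc]
  · intro u hu
    simp [Finset.card_sdiff_of_subset (Finset.mem_powerset.1 hu)]

lemma exists_min (s : Finset α) (n : ℕ) (h : s.card = n + 1) :
    ∃ (m : α) (s' : Finset α), s = insert m s' ∧ (∀ a ∈ s', m < a) ∧ s'.card = n := by
  have hne : s.Nonempty := Finset.card_pos.1 (by omega)
  refine ⟨s.min' hne, s.erase (s.min' hne), (Finset.insert_erase (s.min'_mem hne)).symm, ?_, ?_⟩
  · intro a ha
    exact Finset.min'_lt_of_mem_erase_min' s hne ha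
  · rw [Finset.card_erase_of_mem (s.min'_mem hne)]; omega

lemma Tw_eq (τ : ℕ → ℂ) (h0 : τ 0 = 0)
    (hr : ∀ n, τ (n + 1) = (if n = 0 then 1 else 0) +
      ∑ k ∈ Finset.range (n + 1), n.choose k * τ k * τ (n - k)) (s : Finset α) :
    Tw s = τ s.card := by
  induction hn : s.card using Nat.strong_induction_on generalizing s with
  | _ n ih =>
  cases n with
  | zero => simp [Tw, hn, h0]
  | succ n =>
    obtain ⟨m, s', rfl, hm, hc⟩ := exists_min s n hn
    rw [Tw_insert _ _ hm, hr, hc, ← hc, ← sum_pow_card]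
    congr 1
    refine Finset.sum_congr rfl fun u hu => ?_
    have h1 := Finset.card_le_card (Finset.mem_powerset.1 hu)
    have h2 := Finset.card_le_card (Finset.sdiff_subset (s := s') (t := u))
    rw [ih _ (by omega) u rfl, ih _ (by omega) (s' \ u) rfl]

lemma Aw_eq (x : ℂ) (τ A : ℕ → ℂ) (hT : ∀ s : Finset α, Tw s = τ s.card) (h0 : A 0 = 1)
    (hr : ∀ n, A (n + 1) = x *
      ∑ k ∈ Finset.range (n + 1), n.choose k * τ k * A (n - k)) (s : Finset α) :
    Aw x s = A s.card := by
  induction hn : s.card using Nat.strong_induction_on generalizing s with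
  | _ n ih =>
  cases n with
  | zero =>
    rw [Finset.card_eq_zero] at hn
    simp [Aw, hn, h0, W_empty]
  | succ n =>
    obtain ⟨m, s', rfl, hm, hc⟩ := exists_min s n hn
    rw [Aw_insert _ _ _ hm, hr, ← hc, ← sum_pow_card]
    congr 1
    refine Finset.sum_congr rfl fun u hu => ?_
    have h2 := Finset.card_le_card (Finset.sdiff_subset (s := s') (t := u))
    rw [hT, ih _ (by omega) (s' \ u) rfl]

lemma Sw_eq (τ A : ℕ → ℂ) (hT : ∀ s : Finset α, Tw s = τ s.card) (h0 : A 0 = 1)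
    (hr : ∀ n, A (n + 1) =
      ∑ k ∈ Finset.range (n + 1), n.choose k * A k * τ (n - k)) (s : Finset α) :
    Sw s = A s.card := by
  induction hn : s.card using Nat.strong_induction_on generalizing s with
  | _ n ih =>
  cases n with
  | zero =>
    rw [Finset.card_eq_zero] at hn
    simp [Sw, hn, h0, W_empty]
  | succ n =>
    obtain ⟨m, s', rfl, hm, hc⟩ := exists_min s n hn
    rw [Sw_insert _ _ hm, hr, ← hc, ← sum_pow_card]
    refine Finset.sum_congr rfl fun u hu => ?_
    have h2 := Finset.card_le_card (Finset.mem_powerset.1 hu)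
    rw [hT, ih _ (by omega) u rfl]

lemma WB_eq (x : ℂ) (A S : ℕ → ℂ) (hA : ∀ s : Finset α, Aw x s = A s.card)
    (hS : ∀ s : Finset α, Sw s = S s.card) (n : ℕ) (hn : Even n) (s : Finset α)
    (hs : s.card = n + 1) :
    WB x s = ∑ k ∈ Finset.range (n + 1), n.choose k *
      (x * S k + if k = 0 then 1 - x else 0) * A (n - k) := by
  obtain ⟨m, s', rfl, hm, rfl⟩ := exists_min s n hs
  rw [WB_insert' _ _ _ hm hn, ← sum_pow_card s' (fun k => x * S k + if k = 0 then 1 - x else 0)]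
  simp only [hA, hS]

lemma altL_iff (b : Bool) (l : List α) : altL b l ↔ ∀ i, ∀ h : i + 1 < l.length,
    if (Even i ↔ b = true) then l[i] < l[i+1] else l[i+1] < l[i] := by
  induction l generalizing b with
  | nil => simp [altL]
  | cons a l ih =>
    cases l with
    | nil => simp [altL]
    | cons c l =>
      rw [altL, ih]
      constructor
      · rintro ⟨h1, h2⟩ i h
        cases i with
        | zero => simpa using h1
        | succ i =>
          have := h2 i (by simpa using h)
          have e : (Even (i + 1) ↔ b = true) ↔ (Even i ↔ (!b) = true) := by
            rw [Nat.even_add_one]; cases b <;> simp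
          simpa [e] using this
      · intro H
        refine ⟨by simpa using H 0 (by simp), fun i h => ?_⟩
        have := H (i + 1) (by simpa using h)
        have e : (Even (i + 1) ↔ b = true) ↔ (Even i ↔ (!b) = true) := by
          rw [Nat.even_add_one]; cases b <;> simp
        simpa [e] using this

open scoped Classical in
lemma rl_ofFn (n : ℕ) (f : Fin n → α) : rl (List.ofFn f) =
    (Finset.univ.filter fun i : Fin n => ∀ j, i < j → f i < f j).card := by
  induction n with
  | zero => simp [rl]
  | succ n ih =>
    rw [List.ofFn_succ, rl, ih, Fin.card_filter_univ_succ]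
    have : (∀ b ∈ List.ofFn (fun i : Fin n => f i.succ), f 0 < b) ↔ ∀ j, 0 < j → f 0 < f j := by
      simp [List.mem_ofFn, Fin.forall_fin_succ]
    simp only [this, Fin.forall_fin_succ, Fin.succ_lt_succ_iff]
    split_ifs <;> simp
end comb

section ana
open Complex
/-- `sec^x` -/
noncomputable def secp (x z : ℂ) : ℂ := exp (-x * log (cos z))

lemma cos_slit {z : ℂ} (hz : z ∈ Metric.ball (0:ℂ) (Real.pi / 2)) : cos z ∈ slitPlane := by
  rw [mem_slitPlane_iff]
  left
  have h1 : |z.re| < Real.pi / 2 := by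
    have := abs_re_le_norm z
    simp at hz
    linarith
  rw [abs_lt] at h1
  have h2 := Real.cos_pos_of_mem_Ioo h1
  have h3 := Real.cosh_pos z.im
  rw [cos_eq]
  simp only [← ofReal_cos, ← ofReal_sin, ← ofReal_cosh, ← ofReal_sinh, ← ofReal_mul]
  simp [-ofReal_cos, -ofReal_sin, -ofReal_cosh, -ofReal_sinh, -ofReal_mul]
  positivity

lemma hd_secp (x : ℂ) {z : ℂ} (hz : z ∈ Metric.ball (0:ℂ) (Real.pi / 2)) :
    HasDerivAt (secp x) (x * (tan z * secp x z)) z := by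
  have h := cos_slit hz
  have := (((hasDerivAt_cos z).clog h).const_mul (-x)).cexp
  refine this.congr_deriv ?_
  rw [secp, tan_eq_sin_div_cos]
  ring

lemma ball_nhds {z : ℂ} (hz : z ∈ Metric.ball (0:ℂ) (Real.pi / 2)) :
    Metric.ball (0:ℂ) (Real.pi / 2) ∈ nhds z := Metric.isOpen_ball.mem_nhds hz

lemma zero_ball : (0:ℂ) ∈ Metric.ball (0:ℂ) (Real.pi / 2) := by
  simp; positivity

lemma do_secp (x : ℂ) : DifferentiableOn ℂ (secp x) (Metric.ball (0:ℂ) (Real.pi / 2)) :=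
  fun _ hz => (hd_secp x hz).differentiableAt.differentiableWithinAt

lemma hd_tan {z : ℂ} (hz : z ∈ Metric.ball (0:ℂ) (Real.pi / 2)) :
    HasDerivAt tan (1 + tan z * tan z) z := by
  have h := slitPlane_ne_zero (cos_slit hz)
  refine (hasDerivAt_tan h).congr_deriv ?_
  rw [tan_eq_sin_div_cos]
  field_simp
  linear_combination -cos_sq_add_sin_sq z

lemma do_tan : DifferentiableOn ℂ tan (Metric.ball (0:ℂ) (Real.pi / 2)) :=
  fun _ hz => (hd_tan hz).differentiableAt.differentiableWithinAt

lemma cd {f : ℂ → ℂ} (h : DifferentiableOn ℂ f (Metric.ball (0:ℂ) (Real.pi / 2))) (n : ℕ) :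
    ContDiffAt ℂ n f 0 :=
  (h.analyticAt (ball_nhds zero_ball)).contDiffAt

lemma iter_succ {f g : ℂ → ℂ} (n : ℕ)
    (h : ∀ z ∈ Metric.ball (0:ℂ) (Real.pi / 2), HasDerivAt f (g z) z) :
    iteratedDeriv (n + 1) f 0 = iteratedDeriv n g 0 := by
  rw [iteratedDeriv_succ']
  apply Filter.EventuallyEq.iteratedDeriv_eq
  filter_upwards [ball_nhds zero_ball] with z hz
  exact (h z hz).deriv

lemma tan_rec (n : ℕ) : iteratedDeriv (n + 1) tan (0:ℂ) = (if n = 0 then 1 else 0) +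
      ∑ k ∈ Finset.range (n + 1), n.choose k * iteratedDeriv k tan (0:ℂ) *
        iteratedDeriv (n - k) tan (0:ℂ) := by
  rw [iter_succ n (fun z hz => hd_tan hz),
    ← iteratedDeriv_mul (cd do_tan n) (cd do_tan n)]
  have := iteratedDeriv_add (n := n) (f := fun _ : ℂ => (1:ℂ)) (g := tan * tan) (x := 0)
    contDiffAt_const ((cd do_tan n).mul (cd do_tan n))
  rw [iteratedDeriv_const] at this
  exact this

lemma secp_rec (x : ℂ) (n : ℕ) : iteratedDeriv (n + 1) (secp x) (0:ℂ) = x *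
      ∑ k ∈ Finset.range (n + 1), n.choose k * iteratedDeriv k tan (0:ℂ) *
        iteratedDeriv (n - k) (secp x) (0:ℂ) := by
  rw [iter_succ n (fun z hz => hd_secp x hz),
    ← iteratedDeriv_mul (cd do_tan n) (cd (do_secp x) n)]
  exact iteratedDeriv_const_mul_field _ _

lemma sec_rec (n : ℕ) : iteratedDeriv (n + 1) (secp 1) (0:ℂ) =
      ∑ k ∈ Finset.range (n + 1), n.choose k * iteratedDeriv k (secp 1) (0:ℂ) *
        iteratedDeriv (n - k) tan (0:ℂ) := by
  rw [iter_succ n (fun z hz => hd_secp 1 hz),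
    ← iteratedDeriv_mul (cd (do_secp 1) n) (cd do_tan n)]
  congr 1
  ext z
  simp [mul_comm]

noncomputable def gfun (x z : ℂ) : ℂ := (x * secp 1 z + (1 - x)) * secp x z

lemma do_g (x : ℂ) : DifferentiableOn ℂ (gfun x) (Metric.ball (0:ℂ) (Real.pi / 2)) :=
  (((do_secp 1).const_mul x).add_const _).mul (do_secp x)

lemma g_rec (x : ℂ) (n : ℕ) : iteratedDeriv n (gfun x) (0:ℂ) =
      ∑ k ∈ Finset.range (n + 1), n.choose k *
        (x * iteratedDeriv k (secp 1) (0:ℂ) + if k = 0 then 1 - x else 0) *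
        iteratedDeriv (n - k) (secp x) (0:ℂ) := by
  have d1 := ((do_secp 1).const_mul x)
  have := iteratedDeriv_mul (cd (d1.add_const (1 - x)) n) (cd (do_secp x) n)
  refine this.trans (Finset.sum_congr rfl fun k _ => ?_)
  congr 2
  have := iteratedDeriv_add (n := k) (f := fun z => x * secp 1 z) (g := fun _ => 1 - x) (x := 0)
    (cd d1 k) contDiffAt_const
  rw [iteratedDeriv_const, iteratedDeriv_const_mul_field] at this
  exact this

lemma secp_zero (x : ℂ) : secp x 0 = 1 := by simp [secp]

lemma secp_real (x z : ℝ) (hz : |z| < Real.pi / 2) :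
    secp x z = (((Real.cos z)⁻¹ ^ x : ℝ) : ℂ) := by
  have h := Real.cos_pos_of_mem_Ioo (abs_lt.1 hz)
  rw [Real.rpow_def_of_pos (by positivity), Real.log_inv, secp, ← ofReal_cos,
    ← ofReal_log h.le]
  push_cast
  ring_nf

lemma gfun_real (x z : ℝ) (hz : |z| < Real.pi / 2) :
    gfun x z = (((Real.cos z)⁻¹ ^ x * (1 - x + x * (Real.cos z)⁻¹) : ℝ) : ℂ) := by
  have h1 := secp_real 1 z hz
  rw [ofReal_one] at h1
  rw [gfun, secp_real x z hz, h1, Real.rpow_one]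
  push_cast
  ring

lemma main_ana (x t : ℝ) (ht : |t| < Real.pi / 2) (b : ℕ → ℝ)
    (hb : ∀ n, ((b n : ℝ) : ℂ) = iteratedDeriv (2 * n) (gfun x) 0)
    (ho : ∀ n, Odd n → iteratedDeriv n (gfun x) 0 = 0) :
    HasSum (fun n : ℕ => b n * t ^ (2*n+1) / (Nat.factorial (2*n+1) : ℝ))
      (∫ z in (0:ℝ)..t, ((Real.cos z)⁻¹) ^ x * (1 - x + x * (Real.cos z)⁻¹)) := by
  obtain ⟨F, F0, hF⟩ := (do_g x).isExactOn_ball.with_val_at 0 0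
  have hFd : DifferentiableOn ℂ F (Metric.ball (0:ℂ) (Real.pi / 2)) :=
    fun z hz => (hF z hz).differentiableAt.differentiableWithinAt
  have htb : (t:ℂ) ∈ Metric.ball (0:ℂ) (Real.pi / 2) := by simpa using ht
  have hs := Complex.hasSum_taylorSeries_on_ball hFd htb
  have hsub : ∀ z ∈ Set.uIcc 0 t, |z| < Real.pi / 2 := by
    intro z hz
    have := Set.abs_sub_left_of_mem_uIcc hz
    simp at this
    linarith
  have hFt : F t = ((∫ z in (0:ℝ)..t,
      ((Real.cos z)⁻¹) ^ x * (1 - x + x * (Real.cos z)⁻¹) : ℝ) : ℂ) := by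
    rw [← intervalIntegral.integral_ofReal]
    have hd : ∀ z ∈ Set.uIcc 0 t, HasDerivAt (fun z : ℝ => F z) (gfun x z) z := fun z hz =>
      (hF z (by simpa using hsub z hz)).comp_ofReal
    have hc : ContinuousOn (fun z : ℝ => gfun x z) (Set.uIcc 0 t) := 
      (do_g x).continuousOn.comp continuous_ofReal.continuousOn
        (fun z hz => by simpa using hsub z hz)
    have := intervalIntegral.integral_eq_sub_of_hasDerivAt hd hc.intervalIntegrable
    rw [ofReal_zero, F0, sub_zero] at this
    rw [← this]
    exact intervalIntegral.integral_congr fun z hz => gfun_real x z (hsub z hz)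
  rw [hFt] at hs
  have hinj : Function.Injective (fun n : ℕ => 2 * n + 1) := fun a b h => by simpa using h
  rw [← hinj.hasSum_iff] at hs
  · rw [← Complex.hasSum_ofReal]
    convert! hs using 2 with n
    simp only [Function.comp, iter_succ (2 * n) hF, ← hb]
    push_cast
    simp only [smul_eq_mul, sub_zero]
    ring
  · intro n hn
    cases n with
    | zero => simp [F0]
    | succ n =>
      rw [iter_succ n hF, ho]
      · simp
      · rw [← Nat.not_even_iff_odd]
        rintro ⟨k, rfl⟩
        exact hn ⟨k, by simp; ring⟩
end ana

section final

lemma mem_perm_list (N : ℕ) (σ : Equiv.Perm (Fin N)) :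
    List.ofFn (fun i => σ i.rev) ∈ Arr (Finset.univ : Finset (Fin N)) := by
  rw [mem_Arr]
  constructor
  · rw [List.nodup_ofFn]
    exact σ.injective.comp Fin.rev_injective
  · ext a
    simp only [List.mem_toFinset, List.mem_ofFn, Finset.mem_univ, iff_true]
    exact ⟨(σ.symm a).rev, by simp⟩

lemma alt_perm (n : ℕ) (σ : Equiv.Perm (Fin (2 * n + 1))) :
    altL true (List.ofFn (fun i => σ i.rev)) ↔ UpDown σ := by
  rw [altL_iff]
  simp only [List.length_ofFn, List.getElem_ofFn, iff_true, UpDown]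
  constructor
  · intro H i h
    have := H (2 * n - 1 - i) (by omega)
    have e1 : (⟨2 * n - 1 - i, by omega⟩ : Fin (2 * n + 1)).rev = ⟨i + 1, h⟩ := by
      ext; simp [Fin.val_rev]; omega
    have e2 : (⟨2 * n - 1 - i + 1, by omega⟩ : Fin (2 * n + 1)).rev = i := by
      ext; simp [Fin.val_rev]; omega
    rw [e1, e2] at this
    have e3 : Even (2 * n - 1 - i.val) ↔ ¬ Even i.val := by
      have : 2 * n - 1 - i.val + (i.val + 1) = 2 * n := by omega
      have h2 : Even (2 * n - 1 - i.val + (i.val + 1)) := by rw [this]; simp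
      rw [Nat.even_add, Nat.even_add_one] at h2
      exact h2
    by_cases hi : Even i.val
    · simpa [e3, hi] using this
    · simpa [e3, hi] using this
  · intro H i h
    have := H ⟨2 * n - 1 - i, by omega⟩ (by simp; omega)
    have e1 : (⟨i, by omega⟩ : Fin (2 * n + 1)).rev = ⟨2 * n - 1 - i + 1, by omega⟩ := by
      ext; simp [Fin.val_rev]; omega
    have e2 : (⟨i + 1, by omega⟩ : Fin (2 * n + 1)).rev = ⟨2 * n - 1 - i, by omega⟩ := by
      ext; simp [Fin.val_rev]; omega
    rw [e1, e2]
    have e3 : Even (2 * n - 1 - i) ↔ ¬ Even i := by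
      have : 2 * n - 1 - i + (i + 1) = 2 * n := by omega
      have h2 : Even (2 * n - 1 - i + (i + 1)) := by rw [this]; simp
      rw [Nat.even_add, Nat.even_add_one] at h2
      exact h2
    by_cases hi : Even i
    · simpa [e3, hi] using this
    · simpa [e3, hi] using this

lemma mmp_perm (n : ℕ) (σ : Equiv.Perm (Fin (2 * n + 1))) (h : UpDown σ) :
    rl (List.ofFn (fun i => σ i.rev)).tail = mmp1 σ := by
  classical
  rw [List.ofFn_succ, List.tail_cons, rl_ofFn, mmp1, ← Set.ncard_coe_finset]
  rw [← Set.ncard_image_of_injective _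
    (f := fun i : Fin (2 * n) => (i.succ).rev)
    (fun a b hab => by simpa using hab)]
  congr 1
  ext k
  simp only [Set.mem_image, Finset.coe_filter, Finset.mem_univ, true_and, Set.mem_ofPred_eq]
  constructor
  · rintro ⟨i, hi, rfl⟩
    have hmin : ¬ ∃ j, j < i.succ.rev ∧ σ j < σ i.succ.rev := by
      rintro ⟨j, hj, hj2⟩
      have hj' : i.succ < j.rev := by rwa [← Fin.rev_lt_rev, Fin.rev_rev]
      obtain ⟨j', hj'e⟩ := Fin.exists_succ_eq.2 (Fin.ne_zero_of_lt hj')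
      rw [← hj'e, Fin.succ_lt_succ_iff] at hj'
      have := hi j' hj'
      rw [hj'e, Fin.rev_rev] at this
      exact lt_asymm this hj2
    refine ⟨?_, hmin⟩
    have hk : (i.succ.rev).val + 1 < 2 * n + 1 := by
      rw [Fin.val_rev, Fin.val_succ]
      have := i.isLt
      omega
    have hE : Even (i.succ.rev).val := by
      by_contra hO
      apply hmin
      have hpos : 0 < (i.succ.rev).val := by
        rcases Nat.eq_zero_or_pos (i.succ.rev).val with h0 | h0
        · rw [h0] at hO; simp at hO
        · exact h0
      have h3 := h ⟨(i.succ.rev).val - 1, by omega⟩ (by simp only; omega)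
      have hE2 : Even ((i.succ.rev).val - 1) := by
        rw [Nat.not_even_iff_odd] at hO
        obtain ⟨c, hc⟩ := hO
        exact ⟨c, by omega⟩
      simp only [hE2, if_true] at h3
      refine ⟨⟨(i.succ.rev).val - 1, by omega⟩, by rw [Fin.lt_def]; simp only; omega, ?_⟩
      convert h3 using 2
      ext; simp only; omega
    have h3 := h i.succ.rev hk
    rw [if_pos hE] at h3
    exact ⟨_, by rw [Fin.lt_def]; simp only; omega, h3⟩
  · rintro ⟨⟨j, hj, _⟩, h2⟩
    have hk : (0 : Fin (2 * n + 1)) < k.rev := by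
      rw [Fin.lt_def, Fin.val_rev]
      have := j.isLt
      rw [Fin.lt_def] at hj
      simp only [Fin.val_zero]
      omega
    obtain ⟨i, hi⟩ := Fin.exists_succ_eq.2 (Fin.ne_zero_of_lt hk)
    have hik : i.succ.rev = k := by rw [hi, Fin.rev_rev]
    refine ⟨i, ?_, hik⟩
    intro j hij
    rw [hik]
    have hjk : j.succ.rev < k := by rw [← hik, Fin.rev_lt_rev]; simpa using hij
    rcases lt_trichotomy (σ k) (σ j.succ.rev) with h | h | h
    · exact h
    · exact absurd (σ.injective h) hjk.ne'
    · exact absurd ⟨_, hjk, h⟩ h2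

lemma Bpoly_eq (n : ℕ) (x : ℝ) :
    ((Bpoly n x : ℝ) : ℂ) = WB (x : ℂ) (Finset.univ : Finset (Fin (2 * n + 1))) := by
  classical
  unfold Bpoly WB
  rw [Complex.ofReal_sum]
  refine Finset.sum_bij (fun σ _ => List.ofFn (fun i => σ i.rev)) ?_ ?_ ?_ ?_
  · intro σ _; exact mem_perm_list _ σ
  · intro σ _ τ _ h
    have := List.ofFn_injective h
    ext i
    have := congrFun this i.rev
    beta_reduce at this
    rw [Fin.rev_rev] at this
    rw [this]
  · intro l hl
    have hlen : l.length = 2 * n + 1 := by rw [length_Arr hl]; simp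
    rw [mem_Arr] at hl
    let f : Fin (2 * n + 1) → Fin (2 * n + 1) := fun i => l[i.rev.val]
    have hf : Function.Injective f := by
      intro a b hab
      have := (hl.1.getElem_inj_iff).1 hab
      exact Fin.rev_injective (Fin.ext this)
    refine ⟨Equiv.ofBijective f (Finite.injective_iff_bijective.1 hf), Finset.mem_univ _, ?_⟩
    apply List.ext_getElem
    · simp [hlen]
    · intro i h1 h2
      rw [List.getElem_ofFn]
      simp only [Equiv.ofBijective_apply, f]
      congr 1; simp
  · intro σ _
    by_cases h : UpDown σ
    · rw [if_pos h, if_pos ((alt_perm n σ).2 h), mmp_perm n σ h]; simp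
    · rw [if_neg h, if_neg (fun h' => h ((alt_perm n σ).1 h'))]; simp

end final

/-- `Σ_{n≥1} B^{(1,0,∅,0)}_{2n−1}(x) t^{2n−1}/(2n−1)!` converges to
`∫_0^t (sec z)^x (1 − x + x sec z) dz`. -/
theorem stmt3 (x t : ℝ) (ht : |t| < Real.pi / 2) :
    HasSum (fun n : ℕ => Bpoly n x * t ^ (2*n+1) / (Nat.factorial (2*n+1) : ℝ))
      (∫ z in (0:ℝ)..t, ((Real.cos z)⁻¹) ^ x * (1 - x + x * (Real.cos z)⁻¹)) := by
  have hT : ∀ (α : Type) [LinearOrder α] (s : Finset α),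
      Tw s = iteratedDeriv s.card Complex.tan (0:ℂ) := fun α _ s =>
    Tw_eq (fun n => iteratedDeriv n Complex.tan (0:ℂ)) (by simp) tan_rec s
  have hA : ∀ (y : ℂ) (α : Type) [LinearOrder α] (s : Finset α),
      Aw y s = iteratedDeriv s.card (secp y) (0:ℂ) := fun y α _ s =>
    Aw_eq y (fun n => iteratedDeriv n Complex.tan (0:ℂ)) (fun n => iteratedDeriv n (secp y) (0:ℂ)) (hT α)
      (by simp [secp_zero]) (secp_rec y) s
  have hS : ∀ (α : Type) [LinearOrder α] (s : Finset α),
      Sw s = iteratedDeriv s.card (secp 1) (0:ℂ) := fun α _ s =>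
    Sw_eq (fun n => iteratedDeriv n Complex.tan (0:ℂ)) (fun n => iteratedDeriv n (secp 1) (0:ℂ)) (hT α)
      (by simp [secp_zero]) sec_rec s
  have hodd : ∀ (y : ℂ) n, Odd n → iteratedDeriv n (secp y) (0:ℂ) = 0 := by
    intro y n hn
    have := hA y ℕ (Finset.range n)
    rw [Finset.card_range] at this
    rw [← this, Aw, Finset.card_range, if_neg (by rwa [Nat.not_even_iff_odd])]
  refine main_ana x t ht (fun n => Bpoly n x) ?_ ?_
  · intro n
    rw [Bpoly_eq, g_rec]
    exact WB_eq (x : ℂ) (fun n => iteratedDeriv n (secp x) (0:ℂ))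
      (fun n => iteratedDeriv n (secp 1) (0:ℂ)) (hA x _) (hS _) (2 * n) (by simp) _ (by simp)
  · intro n hn
    rw [g_rec]
    refine Finset.sum_eq_zero fun k hk => ?_
    have hk : k ≤ n := by simpa [Nat.lt_succ_iff] using hk
    by_cases hkE : Even k
    · rw [hodd x (n - k) (Nat.Odd.sub_even hk hn hkE)]; simp
    · have hkO := Nat.not_even_iff_odd.1 hkE
      rw [hodd 1 k hkO, if_neg (by rintro rfl; simp at hkE)]; simp
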